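/- Suppose two runs of the CULO model start from the same initial strategy p^0 (i.e., p^0 = q_r(s^0) = q_{r'}(s'^0)), possibly with different exploration parameters r, r' > 0 and different proactivity sequences η^t, η'^t, and suppose both runs converge to UE strategies p₁*, p₂* ∈ P*. Then p₁* = p₂*: the limiting point of the CULO model is solely determined by the initial strategy p^0. -/

import Mathlib

/-!
Strict monotonicity of the link costs makes the equilibrium link flow unique, so `z = q₁ - q₂`
satisfies `bΛ z = 0` and `Σ z = 0` (`ue_flow_unique`). Along a run, `log pᵗₖ` equals `-r sᵗₖ` up to
a quantity depending only on the OD pair of `k`, and `s` moves in the range of `Λᵀ`; hence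
`∑ₖ qₖ zₖ log pᵗₖ` does not depend on `t` (`log_invariant`), and it has the same value `C` for both
runs because they share `p⁰`.

Letting `t → ∞` in the first run (`limit_of_invariant`): a route with `q₁ = 0 < q₂` would contribute
a term tending to `+∞`, while all other terms stay bounded below. So `supp q₂ ⊆ supp q₁`, and
`∑ₖ qₖ zₖ log q₁ₖ = C`. By symmetry the supports agree and `∑ₖ qₖ zₖ log q₂ₖ = C`. Subtracting,
`∑ₖ qₖ (q₁ₖ - q₂ₖ) (log q₁ₖ - log q₂ₖ) = 0`, which forces `q₁ = q₂` as `log` is strictly increasing.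
-/

open Matrix Filter Finset Topology

noncomputable section

variable {A W K : Type*}

/-- OD-route incidence matrix `Σ`: each column is the standard unit vector at `od k`
(every route `k` serves exactly one OD pair, `od k`). -/
def Sig [DecidableEq W] (od : K → W) : Matrix W K ℝ :=
  Matrix.of fun w k => if od k = w then 1 else 0

/-- The strategy set `P = {p : p ≥ 0, Σ p = 1}`. -/
def Pset [Fintype K] [DecidableEq W] (od : K → W) : Set (K → ℝ) :=
  {p | (∀ k, 0 ≤ p k) ∧ ∀ w : W, (Sig od).mulVec p w = 1}

/-- `q = Σᵀ d`. -/
def qvec [Fintype W] [DecidableEq W] (od : K → W) (d : W → ℝ) : K → ℝ :=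
  (Sig od)ᵀ.mulVec d

/-- `bΛ = Λ · diag q`. -/
def bLam [Fintype K] [Fintype W] [DecidableEq W] [DecidableEq K]
    (Λ : Matrix A K ℝ) (od : K → W) (d : W → ℝ) : Matrix A K ℝ :=
  Λ * Matrix.diagonal (qvec od d)

/-- The link-flow set `X = {bΛ p : p ∈ P}`. -/
def Xset [Fintype K] [Fintype W] [DecidableEq W] [DecidableEq K]
    (Λ : Matrix A K ℝ) (od : K → W) (d : W → ℝ) : Set (A → ℝ) :=
  (fun p => (bLam Λ od d).mulVec p) '' Pset od

/-- The route-cost map `c(p) = Λᵀ u(bΛ p)`. -/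
def routeCost [Fintype A] [Fintype K] [Fintype W] [DecidableEq W] [DecidableEq K]
    (Λ : Matrix A K ℝ) (od : K → W) (d : W → ℝ)
    (u : (A → ℝ) → (A → ℝ)) : (K → ℝ) → (K → ℝ) :=
  fun p => Λᵀ.mulVec (u ((bLam Λ od d).mulVec p))

/-- The UE set `P*`: solutions of the variational inequality. -/
def UEset [Fintype A] [Fintype K] [Fintype W] [DecidableEq W] [DecidableEq K]
    (Λ : Matrix A K ℝ) (od : K → W) (d : W → ℝ)
    (u : (A → ℝ) → (A → ℝ)) : Set (K → ℝ) :=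
  {p | p ∈ Pset od ∧ ∀ p' ∈ Pset od, 0 ≤ routeCost Λ od d u p ⬝ᵥ (p' - p)}

/-- The logit map `q_r`. -/
def logit [Fintype K] [DecidableEq W] (od : K → W) (r : ℝ) (s : K → ℝ) : K → ℝ :=
  fun k => Real.exp (-r * s k) /
    ∑ k' ∈ Finset.univ.filter (fun k' => od k' = od k), Real.exp (-r * s k')

/-- The negative entropy `φ(p) = ∑ₖ qₖ pₖ log pₖ` (with `0·log 0 = 0`). -/
def negEnt [Fintype K] [Fintype W] [DecidableEq W] (od : K → W) (d : W → ℝ)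
    (p : K → ℝ) : ℝ :=
  ∑ k, qvec od d k * (p k * Real.log (p k))

/-- The KL divergence `D(p, p') = ∑ₖ qₖ pₖ (log pₖ − log p'ₖ)` (with `0·log 0 = 0`). -/
def KLdiv [Fintype K] [Fintype W] [DecidableEq W] (od : K → W) (d : W → ℝ)
    (p p' : K → ℝ) : ℝ :=
  ∑ k, qvec od d k * (p k * (Real.log (p k) - Real.log (p' k)))

theorem qvec_apply [Fintype W] [DecidableEq W] (od : K → W) (d : W → ℝ) (k : K) :
    qvec od d k = d (od k) := by
  simp [qvec, Sig, Matrix.mulVec, dotProduct]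

/-- A vector with zero OD sums is orthogonal to every function of the OD pair. -/
theorem od_sum_zero [Fintype W] [Fintype K] [DecidableEq W] (od : K → W) (z : K → ℝ)
    (hz : ∀ w, (Sig od).mulVec z w = 0) (g : W → ℝ) : ∑ k, g (od k) * z k = 0 := by
  have h : qvec od g ⬝ᵥ z = g ⬝ᵥ (Sig od).mulVec z := by
    rw [Matrix.dotProduct_mulVec, qvec, Matrix.mulVec_transpose]
  have h0 : (Sig od).mulVec z = 0 := funext hz
  rw [h0, dotProduct_zero] at h
  simpa [dotProduct, qvec_apply] using h

/-- `⟨v, bΛ z⟩ = ⟨Λᵀ v, q ⊙ z⟩`. -/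
theorem dot_bLam [Fintype A] [Fintype W] [Fintype K] [DecidableEq W] [DecidableEq K]
    (Λ : Matrix A K ℝ) (od : K → W) (d : W → ℝ) (v : A → ℝ) (z : K → ℝ) :
    v ⬝ᵥ (bLam Λ od d).mulVec z = ∑ k, Λᵀ.mulVec v k * (d (od k) * z k) := by
  rw [bLam, ← Matrix.mulVec_mulVec, Matrix.dotProduct_mulVec, ← Matrix.mulVec_transpose]
  simp [dotProduct, Matrix.mulVec_diagonal, qvec_apply]

/-- The equilibrium inequality also holds with the demand weights, that is, in link space. -/
theorem ue_link [Fintype A] [Fintype W] [Fintype K] [DecidableEq W] [DecidableEq K]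
    (Λ : Matrix A K ℝ) (od : K → W) (d : W → ℝ) (hd : ∀ w, 0 < d w)
    (u : (A → ℝ) → (A → ℝ)) (p p' : K → ℝ) (hp : p ∈ UEset Λ od d u) (hp' : p' ∈ Pset od) :
    0 ≤ u ((bLam Λ od d).mulVec p) ⬝ᵥ (bLam Λ od d).mulVec (p' - p) := by
  obtain ⟨⟨hp0, hp1⟩, hvi⟩ := hp
  obtain ⟨hp0', hp1'⟩ := hp'
  have hz : ∀ w, (Sig od).mulVec (p' - p) w = 0 := fun w => by
    rw [Matrix.mulVec_sub, Pi.sub_apply, hp1, hp1', sub_self]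
  have hD : 0 < 1 + ∑ w, d w := by
    have := Finset.sum_nonneg (fun w (_ : w ∈ Finset.univ) => (hd w).le)
    linarith
  set ε := (1 + ∑ w, d w)⁻¹ with hε
  have hε0 : 0 < ε := inv_pos.mpr hD
  have hε1 : ∀ w, ε * d w ≤ 1 := fun w => by
    have := Finset.single_le_sum (fun w (_ : w ∈ Finset.univ) => (hd w).le) (Finset.mem_univ w)
    rw [hε, inv_mul_le_iff₀ hD]
    linarith
  -- Test the inequality at `p + ε q ⊙ (p' - p)`, feasible because `ε qₖ ≤ 1` and `q` is constant
  -- on each OD pair.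
  have key := hvi (fun k => p k + ε * d (od k) * (p' k - p k)) ⟨fun k => by
      have h1 := mul_nonneg (sub_nonneg.mpr (hε1 (od k))) (hp0 k)
      have h2 := mul_nonneg (mul_nonneg hε0.le (hd (od k)).le) (hp0' k)
      linarith, fun w => by
      have h1 := od_sum_zero od _ hz (fun w' => if w' = w then ε * d w' else 0)
      have h2 := hp1 w
      simp only [Sig, Matrix.mulVec, dotProduct, Matrix.of_apply] at h2 ⊢
      refine Eq.trans ?_ ((congrArg₂ (· + ·) h2 h1).trans (add_zero 1))
      rw [← Finset.sum_add_distrib]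
      refine Finset.sum_congr rfl fun k _ => ?_
      simp only [Pi.sub_apply]
      split_ifs <;> ring⟩
  rw [dot_bLam]
  have h3 : routeCost Λ od d u p ⬝ᵥ ((fun k => p k + ε * d (od k) * (p' k - p k)) - p) =
      ε * ∑ k, Λᵀ.mulVec (u ((bLam Λ od d).mulVec p)) k * (d (od k) * (p' - p) k) := by
    simp only [dotProduct, routeCost, Finset.mul_sum, Pi.sub_apply]
    exact Finset.sum_congr rfl fun k _ => by ring
  rw [h3] at key
  exact nonneg_of_mul_nonneg_right key hε0

theorem ue_flow_unique [Fintype A] [Fintype W] [Fintype K] [DecidableEq W] [DecidableEq K]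
    (Λ : Matrix A K ℝ) (od : K → W) (d : W → ℝ) (hd : ∀ w, 0 < d w)
    (u : (A → ℝ) → (A → ℝ))
    (hmono : ∀ x ∈ Xset Λ od d, ∀ x' ∈ Xset Λ od d, x ≠ x' →
      0 < (u x - u x') ⬝ᵥ (x - x'))
    (p p' : K → ℝ) (hp : p ∈ UEset Λ od d u) (hp' : p' ∈ UEset Λ od d u) :
    (bLam Λ od d).mulVec p = (bLam Λ od d).mulVec p' := by
  by_contra hne
  have h := hmono _ ⟨p, hp.1, rfl⟩ _ ⟨p', hp'.1, rfl⟩ hne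
  have h1 := ue_link Λ od d hd u p p' hp hp'.1
  have h2 := ue_link Λ od d hd u p' p hp' hp.1
  rw [Matrix.mulVec_sub] at h1 h2
  simp only [sub_dotProduct, dotProduct_sub] at h h1 h2
  linarith

theorem logit_pos [Fintype K] [DecidableEq W] (od : K → W) (r : ℝ) (s : K → ℝ) (k : K) :
    0 < logit od r s k := by
  refine div_pos (Real.exp_pos _) (Finset.sum_pos (fun _ _ => Real.exp_pos _) ⟨k, by simp⟩)

/-- The normalising term of the logit map depends only on the OD pair, so it drops out against
a direction with zero OD sums. -/
theorem sum_log_logit [Fintype W] [Fintype K] [DecidableEq W] (od : K → W) (d : W → ℝ)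
    (z : K → ℝ) (hz : ∀ w, (Sig od).mulVec z w = 0) (r : ℝ) (s : K → ℝ) :
    ∑ k, d (od k) * z k * Real.log (logit od r s k) = -r * ∑ k, s k * (d (od k) * z k) := by
  have h := od_sum_zero od z hz (fun w => d w *
    Real.log (∑ k' ∈ Finset.univ.filter (fun k' => od k' = w), Real.exp (-r * s k')))
  rw [← sub_zero (∑ k, d (od k) * z k * Real.log (logit od r s k)), ← neg_zero, ← h,
    sub_neg_eq_add, ← Finset.sum_add_distrib, Finset.mul_sum]
  refine Finset.sum_congr rfl fun k _ => ?_
  have hpos : 0 < ∑ k' ∈ Finset.univ.filter (fun k' => od k' = od k), Real.exp (-r * s k') :=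
    Finset.sum_pos (fun _ _ => Real.exp_pos _) ⟨k, by simp⟩
  rw [logit, Real.log_div (Real.exp_pos _).ne' hpos.ne', Real.log_exp]
  ring

/-- Along a run, the weighted log-strategy is conserved in every direction that changes neither
the link flow nor the OD sums. -/
theorem log_invariant [Fintype A] [Fintype W] [Fintype K] [DecidableEq W] [DecidableEq K]
    (Λ : Matrix A K ℝ) (od : K → W) (d : W → ℝ) (u : (A → ℝ) → (A → ℝ))
    (r : ℝ) (η : ℕ → ℝ) (s p : ℕ → K → ℝ)
    (hs : ∀ t, s (t + 1) = s t + η (t + 1) • routeCost Λ od d u (p t))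
    (hp : ∀ t, p t = logit od r (s t))
    (z : K → ℝ) (hz : ∀ w, (Sig od).mulVec z w = 0) (hb : (bLam Λ od d).mulVec z = 0) (t : ℕ) :
    ∑ k, d (od k) * z k * Real.log (p t k) = ∑ k, d (od k) * z k * Real.log (p 0 k) := by
  have hconst : ∑ k, s t k * (d (od k) * z k) = ∑ k, s 0 k * (d (od k) * z k) := by
    induction t with
    | zero => rfl
    | succ t ih =>
      have h := dot_bLam Λ od d (u ((bLam Λ od d).mulVec (p t))) z
      rw [hb, dotProduct_zero] at h
      rw [← ih, ← add_zero (∑ k, s t k * (d (od k) * z k)), ← mul_zero (η (t + 1)), h,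
        Finset.mul_sum, ← Finset.sum_add_distrib, hs]
      refine Finset.sum_congr rfl fun k _ => ?_
      simp only [Pi.add_apply, Pi.smul_apply, smul_eq_mul, routeCost]
      ring
  rw [hp t, hp 0, sum_log_logit od d z hz, sum_log_logit od d z hz, hconst]

/-- If positive vectors `x t → a` keep `∑ wₖ (aₖ - bₖ) log (x t)ₖ` constant, with `w > 0` and
`b ≥ 0`, then `b` vanishes wherever `a` does (otherwise some terms tend to `+∞` uncompensated)
and the identity passes to the limit. -/
theorem limit_of_invariant [Fintype K] (w a b : K → ℝ) (x : ℕ → K → ℝ) (C : ℝ)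
    (hw : ∀ k, 0 < w k) (hb : ∀ k, 0 ≤ b k)
    (hx : ∀ t k, 0 < x t k) (hlim : Tendsto x atTop (nhds a))
    (hC : ∀ t, ∑ k, w k * (a k - b k) * Real.log (x t k) = C) :
    (∀ k, a k = 0 → b k = 0) ∧ ∑ k, w k * (a k - b k) * Real.log (a k) = C := by
  classical
  have hlim' : ∀ k, Tendsto (fun t => x t k) atTop (nhds (a k)) := tendsto_pi_nhds.mp hlim
  have hfin : ∀ k, (a k = 0 → b k = 0) → Tendsto
      (fun t => w k * (a k - b k) * Real.log (x t k)) atTop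
      (nhds (w k * (a k - b k) * Real.log (a k))) := fun k hk => by
    by_cases h0 : a k = 0
    · simp [h0, hk h0]
    · exact ((hlim' k).log h0).const_mul _
  have hinf : ∀ k, a k = 0 → b k ≠ 0 → Tendsto
      (fun t => w k * (a k - b k) * Real.log (x t k)) atTop atTop := fun k h0 hk => by
    have hneg : w k * (a k - b k) < 0 :=
      mul_neg_of_pos_of_neg (hw k) (by
        have := lt_of_le_of_ne (hb k) (Ne.symm hk)
        linarith)
    have h1 : Tendsto (fun t => x t k) atTop (𝓝[>] 0) :=
      tendsto_nhdsWithin_iff.mpr ⟨h0 ▸ hlim' k, Eventually.of_forall fun t => hx t k⟩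
    exact (Real.tendsto_log_nhdsGT_zero.comp h1).const_mul_atBot_of_neg hneg
  have hbdd : ∀ k, ∃ m : ℝ, ∀ᶠ t in atTop, m ≤ w k * (a k - b k) * Real.log (x t k) := fun k => by
    by_cases hk : a k = 0 → b k = 0
    · exact ⟨_, (hfin k hk).eventually (eventually_ge_nhds (sub_one_lt _))⟩
    · push Not at hk
      exact ⟨0, (hinf k hk.1 hk.2).eventually_ge_atTop 0⟩
  have hsupp : ∀ k, a k = 0 → b k = 0 := fun k h0 => by
    by_contra hk
    choose m hm using hbdd
    obtain ⟨t, ht1, ht2⟩ := ((eventually_all.mpr hm).and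
      ((hinf k h0 hk).eventually_gt_atTop (C - ∑ j ∈ Finset.univ.erase k, m j))).exists
    have h1 := Finset.add_sum_erase Finset.univ
      (fun j => w j * (a j - b j) * Real.log (x t j)) (Finset.mem_univ k)
    have h2 : ∑ j ∈ Finset.univ.erase k, m j ≤
        ∑ j ∈ Finset.univ.erase k, w j * (a j - b j) * Real.log (x t j) :=
      Finset.sum_le_sum fun j _ => ht1 j
    have h3 := hC t
    linarith
  refine ⟨hsupp, ?_⟩
  have h := tendsto_finsetSum Finset.univ fun k _ => hfin k (hsupp k)
  simp only [hC] at h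
  exact tendsto_nhds_unique h tendsto_const_nhds

/-- Corollary 1: two runs of the CULO model started from the same
initial strategy `p⁰` (possibly with different exploration parameters and proactivity
sequences) that both converge to UE strategies have the same limit: the limiting
point of CULO is solely determined by the initial strategy. -/
theorem statement8
    [Fintype A] [Fintype W] [Fintype K] [DecidableEq W] [DecidableEq K]
    (Λ : Matrix A K ℝ) (od : K → W) (d : W → ℝ)
    (hΛ : ∀ a k, Λ a k = 0 ∨ Λ a k = 1)
    (hd : ∀ w, 0 < d w)
    (u : (A → ℝ) → (A → ℝ))
    (hu : ContDiffOn ℝ 1 u (Xset Λ od d))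
    (hnonneg : ∀ x ∈ Xset Λ od d, ∀ a, 0 ≤ u x a)
    (hmono : ∀ x ∈ Xset Λ od d, ∀ x' ∈ Xset Λ od d, x ≠ x' →
      0 < (u x - u x') ⬝ᵥ (x - x'))
    (r₁ r₂ : ℝ) (hr₁ : 0 < r₁) (hr₂ : 0 < r₂)
    (η₁ η₂ : ℕ → ℝ) (hη₁ : ∀ t, 0 < η₁ t) (hη₂ : ∀ t, 0 < η₂ t)
    (s₁ s₂ : ℕ → K → ℝ) (p₁ p₂ : ℕ → K → ℝ)
    (hsdyn₁ : ∀ t, s₁ (t + 1) = s₁ t + η₁ (t + 1) • routeCost Λ od d u (p₁ t))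
    (hpdyn₁ : ∀ t, p₁ t = logit od r₁ (s₁ t))
    (hsdyn₂ : ∀ t, s₂ (t + 1) = s₂ t + η₂ (t + 1) • routeCost Λ od d u (p₂ t))
    (hpdyn₂ : ∀ t, p₂ t = logit od r₂ (s₂ t))
    (hinit : p₁ 0 = p₂ 0)
    (q₁ q₂ : K → ℝ) (hq₁ : q₁ ∈ UEset Λ od d u) (hq₂ : q₂ ∈ UEset Λ od d u)
    (hconv₁ : Tendsto p₁ atTop (nhds q₁))
    (hconv₂ : Tendsto p₂ atTop (nhds q₂)) :
    q₁ = q₂ := by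
  have hz : ∀ w, (Sig od).mulVec (q₁ - q₂) w = 0 := fun w => by
    rw [Matrix.mulVec_sub, Pi.sub_apply, hq₁.1.2, hq₂.1.2, sub_self]
  have hb : (bLam Λ od d).mulVec (q₁ - q₂) = 0 := by
    rw [Matrix.mulVec_sub, ue_flow_unique Λ od d hd u hmono q₁ q₂ hq₁ hq₂, sub_self]
  have inv₁ := log_invariant Λ od d u r₁ η₁ s₁ p₁ hsdyn₁ hpdyn₁ _ hz hb
  have inv₂ := log_invariant Λ od d u r₂ η₂ s₂ p₂ hsdyn₂ hpdyn₂ _ hz hb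
  rw [← hinit] at inv₂
  set C := ∑ k, d (od k) * (q₁ - q₂) k * Real.log (p₁ 0 k)
  obtain ⟨supp₁, lim₁⟩ := limit_of_invariant (fun k => d (od k)) q₁ q₂ p₁ C (fun k => hd _)
    hq₂.1.1 (fun t k => by rw [hpdyn₁]; exact logit_pos _ _ _ _) hconv₁ inv₁
  obtain ⟨supp₂, lim₂⟩ := limit_of_invariant (fun k => d (od k)) q₂ q₁ p₂ (-C) (fun k => hd _)
    hq₁.1.1 (fun t k => by rw [hpdyn₂]; exact logit_pos _ _ _ _) hconv₂ (fun t => by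
      rw [← inv₂ t, ← Finset.sum_neg_distrib]
      exact Finset.sum_congr rfl fun k _ => by simp only [Pi.sub_apply]; ring)
  have hsum : ∑ k, d (od k) * ((q₁ k - q₂ k) * (Real.log (q₁ k) - Real.log (q₂ k))) = 0 := by
    rw [← add_neg_cancel C, ← lim₂, ← lim₁, ← Finset.sum_add_distrib]
    exact Finset.sum_congr rfl fun k _ => by ring
  have hstrict : ∀ k, q₁ k ≠ q₂ k →
      0 < (q₁ k - q₂ k) * (Real.log (q₁ k) - Real.log (q₂ k)) := fun k hne => by
    -- The supports coincide, so two distinct values are both positive.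
    have h1 : 0 < q₁ k := lt_of_le_of_ne (hq₁.1.1 k) fun h =>
      hne (by rw [← h, supp₁ k h.symm])
    have h2 : 0 < q₂ k := lt_of_le_of_ne (hq₂.1.1 k) fun h =>
      hne (by rw [← h, supp₂ k h.symm])
    rcases lt_or_gt_of_ne hne with h | h
    · exact mul_pos_of_neg_of_neg (sub_neg.mpr h) (sub_neg.mpr (Real.log_lt_log h1 h))
    · exact mul_pos (sub_pos.mpr h) (sub_pos.mpr (Real.log_lt_log h2 h))
  have hnn : ∀ k ∈ Finset.univ,
      0 ≤ d (od k) * ((q₁ k - q₂ k) * (Real.log (q₁ k) - Real.log (q₂ k))) := fun k _ => by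
    by_cases h : q₁ k = q₂ k
    · simp [h]
    · exact (mul_pos (hd _) (hstrict k h)).le
  funext k
  by_contra h
  have := (Finset.sum_eq_zero_iff_of_nonneg hnn).mp hsum k (Finset.mem_univ k)
  exact (mul_pos (hd _) (hstrict k h)).ne' this
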